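/- arXiv:0708.2082 — 2 statements merged into one kernel-verified Lean document; each statement's English description precedes it below -/
import Mathlib

section
/- Let n,k be integers with k²−4n>0 not a perfect square, and let ξ=(−k+√(k²−4n))/2 be a root of x²+kx+n=0 (so the corresponding class of forms represents 1). Then the period of the regular continued fraction expansion of ξ is either of odd length and palindromic, or of even length and bipalindromic. -/
/-- Iterates of the Gauss map starting from `ξ`. -/
noncomputable def gaussIter (ξ : ℝ) : ℕ → ℝ
  | 0 => ξ
  | n + 1 => 1 / (gaussIter ξ n - (⌊gaussIter ξ n⌋ : ℝ))

/-- The `n`-th partial quotient of the regular continued fraction expansion of `ξ`. -/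
noncomputable def cfTerm (ξ : ℝ) (n : ℕ) : ℤ := ⌊gaussIter ξ n⌋

/-- The continued fraction expansion of `ξ` is periodic with period length `P` from index `N`. -/
def IsEventuallyPeriodicCF (ξ : ℝ) (N P : ℕ) : Prop :=
  1 ≤ P ∧ ∀ j : ℕ, cfTerm ξ (N + j + P) = cfTerm ξ (N + j)

/-- `s` is the (minimal) period of the eventually periodic regular continued fraction
expansion of `ξ`; it is well defined up to cyclic permutation. -/
def IsCFPeriod (s : List ℤ) (ξ : ℝ) : Prop :=
  s ≠ [] ∧
  (∃ N : ℕ, ∀ j : ℕ, cfTerm ξ (N + j) = s.getD (j % s.length) 0) ∧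
  (∀ P : ℕ, 1 ≤ P → (∃ N : ℕ, IsEventuallyPeriodicCF ξ N P) → s.length ≤ P)

/-- A finite sequence is palindromic if some cyclic permutation of it equals its reversal. -/
def Palindromic (s : List ℤ) : Prop := ∃ t : List ℤ, List.IsRotated s t ∧ t.reverse = t

/-- A finite sequence is bipalindromic if some cyclic permutation of it is the concatenation
of two palindrome blocks each of odd length. -/
def Bipalindromic (s : List ℤ) : Prop :=
  ∃ u v : List ℤ, List.IsRotated s (u ++ v) ∧ Odd u.length ∧ Odd v.length ∧
    u.reverse = u ∧ v.reverse = v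

/-!
Let `ξ'` be the conjugate of `ξ`. Conjugating the continued fraction algorithm of `ξ` produces the
numbers `zₙ = aₙ - ξₙ'`, which satisfy `zₙ₊₁ = aₙ₊₁ + 1 / zₙ`. If `z₀ > 1`, then the algorithm
applied to `zₙ` runs backwards through `zₙ, zₙ₋₁, …, z₀`, reading off `aₙ, aₙ₋₁, …`. Since
`ξ + ξ'` is an integer, `ζ = ⌊ξ⌋ - ξ'` differs from `ξ` by an integer, and it coincides with the
number `z₀` formed from `ζ` itself. So the expansion of `ζ` is purely periodic and symmetric under
`i ↦ P - i`. This reflection of a cycle of length `P` fixes one position if `P` is odd, and two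
positions if `P` is even.
-/

section GaussIter

lemma gaussIter_succ (x : ℝ) (n : ℕ) : gaussIter x (n + 1) = (Int.fract (gaussIter x n))⁻¹ :=
  one_div _

lemma gaussIter_add (x : ℝ) (m n : ℕ) : gaussIter x (m + n) = gaussIter (gaussIter x m) n := by
  induction n with
  | zero => rfl
  | succ n ih => rw [← add_assoc, gaussIter_succ, ih, gaussIter_succ]

lemma gaussIter_succ' (x : ℝ) (n : ℕ) : gaussIter x (n + 1) = gaussIter (Int.fract x)⁻¹ n := by
  rw [add_comm, gaussIter_add, gaussIter_succ]
  rfl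

lemma gaussIter_add_intCast_succ (x : ℝ) (c : ℤ) (n : ℕ) :
    gaussIter (x + c) (n + 1) = gaussIter x (n + 1) := by
  rw [gaussIter_succ', Int.fract_add_intCast, ← gaussIter_succ']

lemma cfTerm_add_intCast_of_pos (x : ℝ) (c : ℤ) {n : ℕ} (hn : 0 < n) :
    cfTerm (x + c) n = cfTerm x n := by
  obtain ⟨m, rfl⟩ := Nat.exists_eq_succ_of_ne_zero hn.ne'
  exact congrArg _ (gaussIter_add_intCast_succ x c m)

lemma cfTerm_add (x : ℝ) (m n : ℕ) : cfTerm x (m + n) = cfTerm (gaussIter x m) n :=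
  congrArg _ (gaussIter_add x m n)

variable {x y : ℝ}

lemma irrational_gaussIter (hx : Irrational x) (n : ℕ) : Irrational (gaussIter x n) := by
  induction n with
  | zero => exact hx
  | succ n ih =>
    rw [gaussIter_succ]
    exact (ih.sub_intCast _).inv

lemma fract_gaussIter_pos (hx : Irrational x) (n : ℕ) : 0 < Int.fract (gaussIter x n) :=
  Int.fract_pos.mpr ((irrational_gaussIter hx n).ne_int _)

lemma one_lt_gaussIter_succ (hx : Irrational x) (n : ℕ) : 1 < gaussIter x (n + 1) := by
  rw [gaussIter_succ]
  exact (one_lt_inv₀ (fract_gaussIter_pos hx n)).mpr (Int.fract_lt_one _)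

lemma one_le_cfTerm_succ (hx : Irrational x) (n : ℕ) : 1 ≤ cfTerm x (n + 1) :=
  Int.le_floor.mpr (mod_cast (one_lt_gaussIter_succ hx n).le)

lemma intFractPair_stream_eq_gaussIter (hx : Irrational x) (n : ℕ) :
    GenContFract.IntFractPair.stream x n =
      some (GenContFract.IntFractPair.of (gaussIter x n)) := by
  induction n with
  | zero => rfl
  | succ n ih =>
    rw [gaussIter_succ]
    exact GenContFract.IntFractPair.stream_succ_of_some ih (fract_gaussIter_pos hx n).ne'

lemma genContFract_of_eq_of_cfTerm_eq (hx : Irrational x) (hy : Irrational y)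
    (h : ∀ n, cfTerm x n = cfTerm y n) : GenContFract.of x = GenContFract.of y := by
  refine GenContFract.ext ?_ (Stream'.Seq.ext fun n => ?_)
  · rw [GenContFract.of_h_eq_floor, GenContFract.of_h_eq_floor]
    exact congrArg Int.cast (h 0)
  · rw [GenContFract.get?_of_eq_some_of_succ_get?_intFractPair_stream
        (intFractPair_stream_eq_gaussIter hx (n + 1)),
      GenContFract.get?_of_eq_some_of_succ_get?_intFractPair_stream
        (intFractPair_stream_eq_gaussIter hy (n + 1))]
    exact congrArg (fun a : ℤ => some (⟨1, a⟩ : GenContFract.Pair ℝ)) (h (n + 1))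

lemma eq_of_cfTerm_eq (hx : Irrational x) (hy : Irrational y)
    (h : ∀ n, cfTerm x n = cfTerm y n) : x = y :=
  tendsto_nhds_unique (GenContFract.of_convergence x)
    (genContFract_of_eq_of_cfTerm_eq hx hy h ▸ GenContFract.of_convergence y)

lemma gaussIter_eq_of_cfTerm_periodic (hx : Irrational x) {N P : ℕ}
    (h : ∀ j, cfTerm x (N + j + P) = cfTerm x (N + j)) :
    gaussIter x (N + P) = gaussIter x N := by
  refine eq_of_cfTerm_eq (irrational_gaussIter hx _) (irrational_gaussIter hx _) fun j => ?_
  rw [← cfTerm_add, ← cfTerm_add, add_right_comm, h]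

end GaussIter

section DualQuotient

variable {K : Type*} [Field K]

/-- The complete quotients of `σ α` as elements of the field `K`, so that a second embedding of `K`
can be applied to them. -/
noncomputable def completeQuotient (σ : K →+* ℝ) (α : K) : ℕ → K
  | 0 => α
  | n + 1 => (completeQuotient σ α n - cfTerm (σ α) n)⁻¹

/-- The number `zₙ = aₙ - τ αₙ`, where `aₙ` and `αₙ` are the `n`-th partial and complete quotients
of `σ α`. It equals `-1 / τ αₙ₊₁`, the quantity of Galois' theorem on reversed periods. -/
noncomputable def dualQuotient (σ τ : K →+* ℝ) (α : K) (n : ℕ) : ℝ :=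
  cfTerm (σ α) n - τ (completeQuotient σ α n)

variable {σ τ : K →+* ℝ} {α : K}

lemma map_completeQuotient (σ : K →+* ℝ) (α : K) (n : ℕ) :
    σ (completeQuotient σ α n) = gaussIter (σ α) n := by
  induction n with
  | zero => rfl
  | succ n ih =>
    rw [completeQuotient, map_inv₀, map_sub, map_intCast, ih, gaussIter_succ]
    rfl

lemma dualQuotient_succ (σ τ : K →+* ℝ) (α : K) (n : ℕ) :
    dualQuotient σ τ α (n + 1) = cfTerm (σ α) (n + 1) + (dualQuotient σ τ α n)⁻¹ := by
  rw [dualQuotient, dualQuotient, completeQuotient, map_inv₀, map_sub, map_intCast, sub_eq_add_neg,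
    ← inv_neg, neg_sub]

lemma dualQuotient_eq_of_gaussIter_eq {m n : ℕ}
    (h : gaussIter (σ α) m = gaussIter (σ α) n) :
    dualQuotient σ τ α m = dualQuotient σ τ α n := by
  have hQ : completeQuotient σ α m = completeQuotient σ α n :=
    σ.injective (by rw [map_completeQuotient, map_completeQuotient, h])
  rw [dualQuotient, dualQuotient, cfTerm, cfTerm, h, hQ]

variable (hα : Irrational (σ α)) (h₀ : 1 < dualQuotient σ τ α 0)
include hα h₀

lemma one_lt_dualQuotient (n : ℕ) : 1 < dualQuotient σ τ α n := by
  induction n with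
  | zero => exact h₀
  | succ n ih =>
    have ha : (1 : ℝ) ≤ cfTerm (σ α) (n + 1) := mod_cast one_le_cfTerm_succ hα n
    have hz : 0 < (dualQuotient σ τ α n)⁻¹ := inv_pos.mpr (one_pos.trans ih)
    rw [dualQuotient_succ]
    linarith

lemma fract_inv_dualQuotient (n : ℕ) :
    Int.fract (dualQuotient σ τ α n)⁻¹ = (dualQuotient σ τ α n)⁻¹ := by
  have hz := one_lt_dualQuotient hα h₀ n
  exact Int.fract_eq_self.mpr ⟨inv_nonneg.mpr (one_pos.trans hz).le, inv_lt_one_of_one_lt₀ hz⟩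

lemma floor_dualQuotient_succ (n : ℕ) :
    ⌊dualQuotient σ τ α (n + 1)⌋ = cfTerm (σ α) (n + 1) := by
  rw [dualQuotient_succ, Int.floor_intCast_add,
    Int.floor_eq_zero_iff.mpr (Int.fract_eq_self.mp (fract_inv_dualQuotient hα h₀ n)), add_zero]

lemma gaussIter_dualQuotient_add (m i : ℕ) :
    gaussIter (dualQuotient σ τ α (m + i)) i = dualQuotient σ τ α m := by
  induction i with
  | zero => rfl
  | succ i ih =>
    rw [gaussIter_succ', ← add_assoc, dualQuotient_succ, Int.fract_intCast_add,
      fract_inv_dualQuotient hα h₀, inv_inv, ih]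

lemma dualQuotient_eq_dualQuotient_zero_of_cfTerm_periodic {N P : ℕ}
    (h : ∀ j, cfTerm (σ α) (N + j + P) = cfTerm (σ α) (N + j)) :
    dualQuotient σ τ α P = dualQuotient σ τ α 0 := by
  have hN : dualQuotient σ τ α (P + N) = dualQuotient σ τ α (0 + N) :=
    dualQuotient_eq_of_gaussIter_eq (by
      rw [add_comm P, zero_add, gaussIter_eq_of_cfTerm_periodic hα h])
  rw [← gaussIter_dualQuotient_add hα h₀ P N, hN, gaussIter_dualQuotient_add hα h₀]

end DualQuotient

section SelfDual

variable {K : Type*} [Field K] {σ τ : K →+* ℝ} {ζ : K} {N P : ℕ}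
  (hζ : Irrational (σ ζ)) (hζ₁ : 1 < σ ζ) (hself : dualQuotient σ τ ζ 0 = σ ζ)
  (h : ∀ j, cfTerm (σ ζ) (N + j + P) = cfTerm (σ ζ) (N + j))
include hζ hζ₁ hself

lemma floor_dualQuotient_of_selfDual (n : ℕ) : ⌊dualQuotient σ τ ζ n⌋ = cfTerm (σ ζ) n := by
  cases n with
  | zero => exact congrArg _ hself
  | succ n => exact floor_dualQuotient_succ hζ (hself ▸ hζ₁) n

include h

lemma gaussIter_eq_dualQuotient_sub {i : ℕ} (hi : i ≤ P) :
    gaussIter (σ ζ) i = dualQuotient σ τ ζ (P - i) := by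
  have h₀ : 1 < dualQuotient σ τ ζ 0 := hself ▸ hζ₁
  have hP : dualQuotient σ τ ζ (P - i + i) = σ ζ := by
    rw [Nat.sub_add_cancel hi, dualQuotient_eq_dualQuotient_zero_of_cfTerm_periodic hζ h₀ h,
      hself]
  rw [← hP, gaussIter_dualQuotient_add hζ h₀]

lemma cfTerm_sub_of_selfDual {i : ℕ} (hi : i ≤ P) : cfTerm (σ ζ) (P - i) = cfTerm (σ ζ) i := by
  rw [← floor_dualQuotient_of_selfDual hζ hζ₁ hself,
    ← gaussIter_eq_dualQuotient_sub hζ hζ₁ hself h hi, cfTerm]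

lemma cfTerm_periodic_of_selfDual : Function.Periodic (cfTerm (σ ζ)) P := fun i => by
  have hP : gaussIter (σ ζ) P = σ ζ := by
    rw [gaussIter_eq_dualQuotient_sub hζ hζ₁ hself h le_rfl, Nat.sub_self, hself]
  rw [add_comm, cfTerm_add, hP]

end SelfDual

section Windows

variable {β : Type*} {a : ℕ → β}

lemma isRotated_map_range'_of_periodic {s : List β} {d : β} {N : ℕ}
    (hs : ∀ j, a (N + j) = s.getD (j % s.length) d) (hper : Function.Periodic a s.length) (i : ℕ) :
    s.IsRotated ((List.range' i s.length).map a) := by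
  refine ⟨i + N * s.length - N, List.ext_getElem (by simp) fun j hj _ => ?_⟩
  have hpos : 0 < s.length := (Nat.zero_le j).trans_lt (by simpa using hj)
  have hN : N ≤ N * s.length := Nat.le_mul_of_pos_right N hpos
  have hshift : N + (j + (i + N * s.length - N)) = i + j + N * s.length := by omega
  rw [List.getElem_rotate, ← List.getD_eq_getElem _ d, ← hs, hshift,
    List.getElem_map, List.getElem_range', one_mul]
  exact hper.nat_mul N _

variable {P : ℕ} (hper : Function.Periodic a P) (hsymm : ∀ i ≤ P, a (P - i) = a i)
include hper hsymm

lemma eq_of_dvd_add_of_periodic_of_symm {i j : ℕ} (hij : P ∣ i + j) : a i = a j := by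
  rcases P.eq_zero_or_pos with rfl | hP
  · obtain ⟨rfl, rfl⟩ := Nat.add_eq_zero_iff.mp (zero_dvd_iff.mp hij)
    rfl
  have hi : i % P ≤ P := (Nat.mod_lt i hP).le
  have hmod : P - i % P ≡ j [MOD P] := by
    refine Nat.ModEq.add_right_cancel' (i % P) ?_
    calc P - i % P + i % P = P := Nat.sub_add_cancel hi
      _ ≡ i + j [MOD P] := (Nat.modEq_zero_iff_dvd.mpr dvd_rfl).trans
          (Nat.modEq_zero_iff_dvd.mpr hij).symm
      _ = j + i := add_comm i j
      _ ≡ j + i % P [MOD P] := (Nat.mod_modEq i P).symm.add_left j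
  rw [← hper.map_mod_nat i, ← hsymm _ hi, ← hper.map_mod_nat (P - i % P), hmod,
    hper.map_mod_nat]

lemma reverse_map_range'_of_dvd {i m : ℕ} (hm : P ∣ 2 * i + m) :
    ((List.range' i (m + 1)).map a).reverse = (List.range' i (m + 1)).map a := by
  refine List.ext_getElem (by simp) fun j _ hj => ?_
  have hj' : j ≤ m := by simpa [Nat.lt_succ_iff] using hj
  simp only [List.getElem_reverse, List.getElem_map, List.getElem_range', List.length_map,
    List.length_range', one_mul]
  refine eq_of_dvd_add_of_periodic_of_symm hper hsymm ?_
  convert hm using 1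
  omega

end Windows

section Period

variable {s : List ℤ} {a : ℕ → ℤ} {N : ℕ}
  (hs : ∀ j, a (N + j) = s.getD (j % s.length) 0) (hper : Function.Periodic a s.length)
  (hsymm : ∀ i ≤ s.length, a (s.length - i) = a i)
include hs hper hsymm

lemma palindromic_of_odd_length (hodd : Odd s.length) : Palindromic s := by
  obtain ⟨m, hm⟩ := hodd
  refine ⟨_, isRotated_map_range'_of_periodic hs hper (m + 1), ?_⟩
  rw [hm]
  exact reverse_map_range'_of_dvd hper hsymm ⟨2, by omega⟩

lemma bipalindromic_of_even_length (hne : s ≠ []) (heven : Even s.length) : Bipalindromic s := by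
  obtain ⟨m, hm⟩ : ∃ m, s.length = 2 * m + 2 := by
    have hpos : 0 < s.length := List.length_pos_iff.mpr hne
    obtain ⟨c, hc⟩ := heven
    exact ⟨c - 1, by omega⟩
  refine ⟨(List.range' 0 1).map a, (List.range' 1 (2 * m + 1)).map a, ?_, by simp, by simp,
    reverse_map_range'_of_dvd hper hsymm (dvd_zero _),
    reverse_map_range'_of_dvd hper hsymm ⟨1, by omega⟩⟩
  rw [← List.map_append, ← Nat.zero_add 1, List.range'_append_1, Nat.zero_add]
  convert isRotated_map_range'_of_periodic hs hper 0 using 3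
  omega

end Period

lemma exists_embeddings_add_mul_sqrt {r : ℚ} (hr : 0 ≤ r) (hsq : ¬ IsSquare r) (p q : ℚ) :
    ∃ (K : Type) (_ : Field K) (σ τ : K →+* ℝ) (α : K),
      σ α = p + q * √(r : ℝ) ∧ τ α = p - q * √(r : ℝ) := by
  have : Fact (∀ t : ℚ, t ^ 2 ≠ r + 0 * t) :=
    ⟨fun t ht => hsq ⟨t, by rw [← sq, ht, zero_mul, add_zero]⟩⟩
  have hroot : √(r : ℝ) * √(r : ℝ) = r := Real.mul_self_sqrt (mod_cast hr)
  let σ : QuadraticAlgebra ℚ r 0 →ₐ[ℚ] ℝ :=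
    QuadraticAlgebra.lift ⟨√(r : ℝ), by simp [hroot, Rat.smul_def]⟩
  let τ : QuadraticAlgebra ℚ r 0 →ₐ[ℚ] ℝ :=
    QuadraticAlgebra.lift ⟨-√(r : ℝ), by simp [hroot, Rat.smul_def]⟩
  exact ⟨QuadraticAlgebra ℚ r 0, inferInstance, σ.toRingHom, τ.toRingHom, ⟨p, q⟩,
    by simp [σ, Rat.smul_def],
    by simp [τ, Rat.smul_def, sub_eq_add_neg]⟩

lemma exists_selfDual_eq_add_intCast (k : ℤ) {r : ℚ} (hr : 4 < r) (hsq : ¬ IsSquare r) :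
    ∃ (K : Type) (_ : Field K) (σ τ : K →+* ℝ) (ζ : K) (c : ℤ),
      σ ζ = (-(k : ℝ) + √(r : ℝ)) / 2 + c ∧ 1 < σ ζ ∧ dualQuotient σ τ ζ 0 = σ ζ := by
  set ξ : ℝ := (-(k : ℝ) + √(r : ℝ)) / 2 with hξ
  obtain ⟨K, _, σ, τ, ζ, hσ, hτ⟩ :=
    exists_embeddings_add_mul_sqrt (by linarith) hsq (⌊ξ⌋ + k / 2) (1 / 2)
  have hσξ : σ ζ = ξ + (⌊ξ⌋ + k : ℤ) := by rw [hσ, hξ]; push_cast; ring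
  have hτξ : τ ζ = ⌊ξ⌋ - ξ := by rw [hτ, hξ]; push_cast; ring
  refine ⟨K, _, σ, τ, ζ, ⌊ξ⌋ + k, hσξ, ?_, ?_⟩
  · have hroot : 2 < √(r : ℝ) := Real.lt_sqrt_of_sq_lt (by norm_num; exact_mod_cast hr)
    calc (1 : ℝ) < √(r : ℝ) - 1 := by linarith
      _ = ξ + (ξ - 1 + k) := by rw [hξ]; ring
      _ < ξ + (⌊ξ⌋ + k) := by gcongr; exact Int.sub_one_lt_floor ξ
      _ = σ ζ := by rw [hσξ]; push_cast; rfl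
  · calc dualQuotient σ τ ζ 0 = (⌊σ ζ⌋ : ℤ) - τ ζ := rfl
      _ = (⌊ξ⌋ + (⌊ξ⌋ + k) : ℤ) - (⌊ξ⌋ - ξ) := by rw [hσξ, Int.floor_add_intCast, hτξ]
      _ = σ ζ := by rw [hσξ]; push_cast; ring

theorem statement9_general (k : ℤ) {r : ℚ} (hr : 4 < r) (hsq : ¬ IsSquare r) {s : List ℤ}
    (hne : s ≠ []) {N : ℕ}
    (hs : ∀ j, cfTerm ((-(k : ℝ) + √(r : ℝ)) / 2) (N + j) = s.getD (j % s.length) 0) :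
    (Odd s.length ∧ Palindromic s) ∨ (Even s.length ∧ Bipalindromic s) := by
  obtain ⟨K, _, σ, τ, ζ, c, hσ, hone, hself⟩ := exists_selfDual_eq_add_intCast k hr hsq
  have hlen : 0 < s.length := List.length_pos_iff.mpr hne
  have hirr : Irrational (σ ζ) := by
    have hroot : Irrational √(r : ℝ) := irrational_sqrt_ratCast_iff.mpr ⟨hsq, by linarith⟩
    rw [hσ, neg_add_eq_sub]
    exact ((hroot.sub_intCast k).div_natCast two_ne_zero).add_intCast c
  have hsζ (j : ℕ) : cfTerm (σ ζ) (N + s.length + j) = s.getD (j % s.length) 0 := by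
    rw [hσ, cfTerm_add_intCast_of_pos _ _ (by omega), add_assoc, hs, Nat.add_mod_left]
  have hsper (j : ℕ) : cfTerm (σ ζ) (N + s.length + j + s.length) =
      cfTerm (σ ζ) (N + s.length + j) := by
    rw [add_assoc _ j, hsζ, hsζ, Nat.add_mod_right]
  have hper := cfTerm_periodic_of_selfDual hirr hone hself hsper
  have hsymm (i : ℕ) (hi : i ≤ s.length) := cfTerm_sub_of_selfDual hirr hone hself hsper hi
  rcases Nat.even_or_odd s.length with heven | hodd
  · exact .inr ⟨heven, bipalindromic_of_even_length hsζ hper hsymm hne heven⟩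
  · exact .inl ⟨hodd, palindromic_of_odd_length hsζ hper hsymm hodd⟩

lemma four_lt_of_not_isSquare_sq_sub_four_mul {n k : ℤ} (hpos : 0 < k ^ 2 - 4 * n)
    (hsq : ¬ IsSquare (k ^ 2 - 4 * n)) : 4 < k ^ 2 - 4 * n := by
  have hmod : k ^ 2 % 4 = 0 ∨ k ^ 2 % 4 = 1 := by
    rcases Int.even_or_odd k with hk | hk
    · exact .inl (Int.emod_eq_zero_of_dvd (by simpa using pow_dvd_pow_of_dvd hk.two_dvd 2))
    · exact .inr (Int.sq_mod_four_eq_one_of_odd hk)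
  have hne_one : k ^ 2 - 4 * n ≠ 1 := fun h => hsq ⟨1, h⟩
  have hne_four : k ^ 2 - 4 * n ≠ 4 := fun h => hsq ⟨2, h⟩
  omega

/-- The continued fraction of a root of `x^2 + k*x + n = 0` (whose class of forms
represents 1) has period either odd and palindromic, or even and bipalindromic. -/
theorem statement9 (n k : ℤ)
    (hpos : 0 < k ^ 2 - 4 * n) (hsq : ¬ IsSquare (k ^ 2 - 4 * n)) :
    ∀ s : List ℤ,
      IsCFPeriod s ((-(k : ℝ) + Real.sqrt ((k ^ 2 - 4 * n : ℤ) : ℝ)) / 2) →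
      (Odd s.length ∧ Palindromic s) ∨ (Even s.length ∧ Bipalindromic s) := by
  rintro s ⟨hne, ⟨N, hN⟩, -⟩
  exact statement9_general k (mod_cast four_lt_of_not_isSquare_sq_sub_four_mul hpos hsq)
    (Rat.isSquare_intCast_iff.not.mpr hsq) hne (by simpa only [Rat.cast_intCast] using hN)
end

section
/- Let f=(m,n,k) be an integer binary quadratic form with discriminant Δ=k²−4mn>0 not a perfect square, let Γ(f)=[a_1,…,a_P] be the period of the continued fraction of ξ⁺(f), let Π(f)=[a_1,…,a_p] be Γ(f) if P is even and Γ(f) repeated twice (p=2P) if P is odd, and set t=a_1+⋯+a_p. Then the number of integer triples (m',n',k') that are SL(2,ℤ)-equivalent to f and satisfy m'>0 and n'<0 is exactly t, and likewise the number of triples equivalent to f with m'<0 and n'>0 is exactly t. -/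
/-- The value of the binary quadratic form `f = (m, n, k)`, i.e. `m*x^2 + n*y^2 + k*x*y`. -/
def qval (f : ℤ × ℤ × ℤ) (x y : ℤ) : ℤ := f.1 * x ^ 2 + f.2.1 * y ^ 2 + f.2.2 * x * y

/-- The discriminant `k^2 - 4*m*n` of the form `f = (m, n, k)`. -/
def formDisc (f : ℤ × ℤ × ℤ) : ℤ := f.2.2 ^ 2 - 4 * f.1 * f.2.1

/-- `SL(2,ℤ)`-equivalence of binary quadratic forms. -/
def SLEquiv (f g : ℤ × ℤ × ℤ) : Prop :=
  ∃ a b c d : ℤ, a * d - b * c = 1 ∧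
    ∀ x y : ℤ, qval g x y = qval f (a * x + b * y) (c * x + d * y)

/-- The root with the plus sign of `m*ξ^2 + k*ξ + n = 0`, for `f = (m, n, k)`. -/
noncomputable def xiPlus (f : ℤ × ℤ × ℤ) : ℝ :=
  (-(f.2.2 : ℝ) + Real.sqrt ((formDisc f : ℤ) : ℝ)) / (2 * (f.1 : ℝ))

/-- The root with the minus sign of `m*ξ^2 + k*ξ + n = 0`, for `f = (m, n, k)`. -/
noncomputable def xiMinus (f : ℤ × ℤ × ℤ) : ℝ :=
  (-(f.2.2 : ℝ) - Real.sqrt ((formDisc f : ℤ) : ℝ)) / (2 * (f.1 : ℝ))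

/-- The conjugate `(m, n, -k)` of the form `(m, n, k)`. -/
def conjF (f : ℤ × ℤ × ℤ) : ℤ × ℤ × ℤ := (f.1, f.2.1, -f.2.2)

/-- The adjoint `(-n, -m, k)` of the form `(m, n, k)`. -/
def adjF (f : ℤ × ℤ × ℤ) : ℤ × ℤ × ℤ := (-f.2.1, -f.1, f.2.2)

/-- The antipodal `(-n, -m, -k)` of the form `(m, n, k)`. -/
def antipF (f : ℤ × ℤ × ℤ) : ℤ × ℤ × ℤ := (-f.2.1, -f.1, -f.2.2)

/-- A form `(m, n, k)` is primitive if `gcd(m, n, k) = 1`. -/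
def IsPrimitiveForm (f : ℤ × ℤ × ℤ) : Prop := Int.gcd f.1 (Int.gcd f.2.1 f.2.2) = 1

/-!
The forms with `m > 0 > n` are the edges of Conway's river. Moving along the river replaces one of
the two basis vectors by their sum, the sign of `f(1, 1)` dictating which one. Two forms on the
river of the same class differ by a matrix of determinant one which, up to sign and inversion, has
nonnegative entries, so the Euclidean algorithm shows that `riverStep` acts on each class as a
single orbit.

Starting from a form with `ξ⁺ > 1` and `-1 < ξ⁻ < 0`, the river makes `⌊ξ⁺⌋` steps of one kind and
then `⌊1 / (ξ⁺ - ⌊ξ⁺⌋)⌋` of the other before it meets such a form again. The first return map to the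
reduced forms is thus two steps of the continued fraction algorithm, with return time the sum of two
partial quotients, and it has period `lcm(2, P) / 2`. Hence the river is periodic, of length the sum
of `lcm(2, P)` consecutive partial quotients. The rotation `(m, n, k) ↦ (n, m, -k)`, which belongs
to `SL(2, ℤ)`, exchanges the two sign conditions.
-/

open Function

section GaussMap

/-- The Gauss map `x ↦ 1 / (x - ⌊x⌋)` of continued fractions, whose iterates are `gaussIter`;
integers are sent to the junk value `0`. -/
noncomputable def gaussMap (x : ℝ) : ℝ := (Int.fract x)⁻¹

lemma gaussIter_eq_iterate (ξ : ℝ) (n : ℕ) : gaussIter ξ n = gaussMap^[n] ξ := by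
  induction n with
  | zero => rfl
  | succ n ih => rw [iterate_succ_apply', ← ih, gaussIter, one_div, gaussMap, Int.fract]

lemma cfTerm_eq_floor_iterate (ξ : ℝ) (n : ℕ) : cfTerm ξ n = ⌊gaussMap^[n] ξ⌋ := by
  rw [cfTerm, gaussIter_eq_iterate]

lemma cfTerm_iterate_gaussMap (ξ : ℝ) (m n : ℕ) :
    cfTerm (gaussMap^[m] ξ) n = cfTerm ξ (m + n) := by
  rw [cfTerm_eq_floor_iterate, cfTerm_eq_floor_iterate, ← iterate_add_apply, add_comm]

lemma convergent_eq_of_cfTerm_eq {x y : ℝ} (h : ∀ n, cfTerm x n = cfTerm y n) (n : ℕ) :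
    x.convergent n = y.convergent n := by
  have h_floor : ⌊x⌋ = ⌊y⌋ := h 0
  induction n generalizing x y with
  | zero => rw [Real.convergent_zero, Real.convergent_zero, h_floor]
  | succ n ih =>
    have h_tail (j : ℕ) : cfTerm (gaussMap x) j = cfTerm (gaussMap y) j := by
      simpa only [iterate_one, h] using
        (cfTerm_iterate_gaussMap x 1 j).trans (cfTerm_iterate_gaussMap y 1 j ▸ h (1 + j))
    rw [Real.convergent_succ, Real.convergent_succ, h_floor]
    exact congrArg (fun q : ℚ => (⌊y⌋ + q⁻¹ : ℚ)) (ih h_tail (h_tail 0))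

lemma cfTerm_injective : Injective cfTerm := by
  intro x y h
  have h_conv : (GenContFract.of x).convs = (GenContFract.of y).convs := by
    funext n
    rw [Real.convs_eq_convergent, Real.convs_eq_convergent,
      convergent_eq_of_cfTerm_eq (congrFun h) n]
  exact tendsto_nhds_unique (GenContFract.of_convergence x)
    (h_conv ▸ GenContFract.of_convergence y)

lemma isPeriodicPt_gaussMap_iff {ξ : ℝ} {q : ℕ} :
    IsPeriodicPt gaussMap q ξ ↔ ∀ j, cfTerm ξ (q + j) = cfTerm ξ j := by
  simp_rw [← cfTerm_iterate_gaussMap, ← funext_iff, cfTerm_injective.eq_iff]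
  rfl

lemma irrational_gaussMap {x : ℝ} (hx : Irrational x) : Irrational (gaussMap x) :=
  (hx.sub_intCast ⌊x⌋).inv

lemma irrational_gaussMap_iterate {x : ℝ} (hx : Irrational x) (n : ℕ) :
    Irrational (gaussMap^[n] x) :=
  Iterate.rec Irrational hx (fun _ => irrational_gaussMap) n

lemma floor_lt_of_irrational {x : ℝ} (hx : Irrational x) : (⌊x⌋ : ℝ) < x :=
  (Int.floor_le x).lt_of_ne (hx.ne_int ⌊x⌋).symm

lemma one_lt_gaussMap {x : ℝ} (hx : Irrational x) : 1 < gaussMap x :=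
  (one_lt_inv₀ (sub_pos.2 (floor_lt_of_irrational hx))).2 (Int.fract_lt_one x)

end GaussMap

section Period

lemma birkhoffSum_iterate_of_isPeriodicPt {α G : Type*} [AddCommGroup G] {T : α → α} {n : ℕ}
    {x : α} (h : IsPeriodicPt T n x) (φ : α → G) (m : ℕ) :
    birkhoffSum T φ n (T^[m] x) = birkhoffSum T φ n x := by
  induction m with
  | zero => rfl
  | succ m ih =>
    rw [iterate_succ_apply', ← ih, ← sub_eq_zero, birkhoffSum_apply_sub_birkhoffSum,
      (h.apply_iterate m).eq, sub_self]

lemma list_sum_eq_sum_range_getD {M : Type*} [AddCommMonoid M] (s : List M) :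
    s.sum = ∑ j ∈ Finset.range s.length, s.getD j 0 := by
  simp [Finset.sum_range]

namespace IsCFPeriod

variable {s : List ℤ} {ξ : ℝ}

lemma exists_forall_ge_minimalPeriod (h : IsCFPeriod s ξ) :
    ∃ N, ∀ M ≥ N, minimalPeriod gaussMap (gaussMap^[M] ξ) = s.length ∧
      birkhoffSum gaussMap Int.floor s.length (gaussMap^[M] ξ) = s.sum := by
  obtain ⟨hs, ⟨N, hN⟩, hmin⟩ := h
  have hpos : 0 < s.length := List.length_pos_iff.2 hs
  have hper : IsPeriodicPt gaussMap s.length (gaussMap^[N] ξ) := by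
    refine isPeriodicPt_gaussMap_iff.2 fun j => ?_
    rw [cfTerm_iterate_gaussMap, cfTerm_iterate_gaussMap, hN, hN, Nat.add_mod_left]
  have hmem : gaussMap^[N] ξ ∈ periodicPts gaussMap := mk_mem_periodicPts hpos hper
  have hlength : minimalPeriod gaussMap (gaussMap^[N] ξ) = s.length := by
    refine (hper.minimalPeriod_le hpos).antisymm (hmin _ (hper.minimalPeriod_pos hpos) ?_)
    refine ⟨N, hper.minimalPeriod_pos hpos, fun j => ?_⟩
    have hterm := isPeriodicPt_gaussMap_iff.1
      (isPeriodicPt_minimalPeriod gaussMap (gaussMap^[N] ξ)) j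
    rwa [cfTerm_iterate_gaussMap, cfTerm_iterate_gaussMap, add_comm _ j, ← add_assoc] at hterm
  have hsum : birkhoffSum gaussMap Int.floor s.length (gaussMap^[N] ξ) = s.sum := by
    rw [list_sum_eq_sum_range_getD, birkhoffSum]
    refine Finset.sum_congr rfl fun j hj => ?_
    rw [← cfTerm_eq_floor_iterate, cfTerm_iterate_gaussMap, hN,
      Nat.mod_eq_of_lt (Finset.mem_range.1 hj)]
  refine ⟨N, fun M hM => ?_⟩
  rw [← Nat.sub_add_cancel hM, iterate_add_apply, minimalPeriod_apply_iterate hmem,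
    birkhoffSum_iterate_of_isPeriodicPt hper]
  exact ⟨hlength, hsum⟩

lemma exists_forall_ge_birkhoffSum_lcm (h : IsCFPeriod s ξ) :
    ∃ N, ∀ M ≥ N, gaussMap^[M] ξ ∈ periodicPts gaussMap ∧
      birkhoffSum gaussMap Int.floor (Nat.lcm 2 (minimalPeriod gaussMap (gaussMap^[M] ξ)))
        (gaussMap^[M] ξ) = (if Even s.length then s else s ++ s).sum := by
  obtain ⟨N, hN⟩ := h.exists_forall_ge_minimalPeriod
  refine ⟨N, fun M hM => ?_⟩
  obtain ⟨hlength, hsum⟩ := hN M hM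
  refine ⟨minimalPeriod_pos_iff_mem_periodicPts.1 (hlength ▸ List.length_pos_iff.2 h.1), ?_⟩
  rw [hlength]
  split_ifs with heven
  · rw [Nat.lcm_eq_right heven.two_dvd, hsum]
  · have hcoprime : Nat.Coprime 2 s.length := (Nat.not_even_iff_odd.1 heven).coprime_two_left
    have hreturn : gaussMap^[s.length] (gaussMap^[M] ξ) = gaussMap^[M] ξ :=
      hlength ▸ iterate_minimalPeriod
    rw [hcoprime.lcm_eq_mul, two_mul, birkhoffSum_add, hreturn, hsum, List.sum_append]

end IsCFPeriod

end Period

section NaturalExtension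

/-- The natural extension of the Gauss map: the Möbius transformation that `gaussMap` performs on
the first coordinate is applied to both. It tracks a quadratic irrational and its conjugate. -/
noncomputable def gaussExt (p : ℝ × ℝ) : ℝ × ℝ := (gaussMap p.1, (p.2 - ⌊p.1⌋)⁻¹)

/-- The pairs `(ξ, ξ')` with `1 < ξ` and `-1 < ξ' < 0`: by Galois, those for which the continued
fraction of the quadratic irrational `ξ` with conjugate `ξ'` is purely periodic. -/
def IsReducedPair (p : ℝ × ℝ) : Prop := 1 < p.1 ∧ -1 < p.2 ∧ p.2 < 0

lemma fst_gaussExt_iterate (p : ℝ × ℝ) (n : ℕ) : (gaussExt^[n] p).1 = gaussMap^[n] p.1 :=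
  (Semiconj.iterate_right (f := Prod.fst) (fun _ => rfl) n) p

lemma isReducedPair_gaussExt {p : ℝ × ℝ} (hirr : Irrational p.1) (hfst : 1 < p.1)
    (hsnd : p.2 < 0) : IsReducedPair (gaussExt p) := by
  have hfloor : (1 : ℝ) ≤ ⌊p.1⌋ := mod_cast Int.le_floor.2 (mod_cast hfst.le)
  have hlt : p.2 - ⌊p.1⌋ < -1 := by linarith
  refine ⟨one_lt_gaussMap hirr, ?_, inv_lt_zero.2 (by linarith)⟩
  change -1 < (p.2 - ⌊p.1⌋)⁻¹
  rw [lt_inv_of_neg (by norm_num) (by linarith)]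
  norm_num [hlt]

lemma irrational_snd_gaussExt_iterate {p : ℝ × ℝ} (h : Irrational p.2) (n : ℕ) :
    Irrational (gaussExt^[n] p).2 :=
  Iterate.rec (fun q : ℝ × ℝ => Irrational q.2) h (fun _ hq => (hq.sub_intCast _).inv) n

/- As long as the second coordinate stays positive it follows its own Gauss orbit with the same
partial quotients, which forces both coordinates to agree. -/
lemma exists_snd_gaussExt_iterate_neg {x y : ℝ} (hx : Irrational x) (hy : Irrational y)
    (hne : x ≠ y) : ∃ n, (gaussExt^[n + 1] (x, y)).2 < 0 := by
  by_contra! hnonneg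
  have hle (n : ℕ) : (⌊gaussMap^[n] x⌋ : ℝ) ≤ (gaussExt^[n] (x, y)).2 := by
    have := hnonneg n
    rwa [iterate_succ_apply', gaussExt, inv_nonneg, sub_nonneg, fst_gaussExt_iterate] at this
  have hone_lt (n : ℕ) : 1 < (gaussExt^[n + 1] (x, y)).2 := by
    have hfloor : (1 : ℝ) ≤ ⌊gaussMap^[n + 1] x⌋ := by
      rw [iterate_succ_apply']
      exact mod_cast Int.le_floor.2
        (mod_cast (one_lt_gaussMap (irrational_gaussMap_iterate hx n)).le)
    exact (hfloor.trans (hle (n + 1))).lt_of_ne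
      (irrational_snd_gaussExt_iterate (p := (x, y)) hy (n + 1)).ne_one.symm
  have hfloor (n : ℕ) : ⌊(gaussExt^[n] (x, y)).2⌋ = ⌊gaussMap^[n] x⌋ := by
    refine Int.floor_eq_iff.2 ⟨hle n, ?_⟩
    have hinv := inv_lt_one_of_one_lt₀ (hone_lt n)
    rw [iterate_succ_apply', gaussExt, inv_inv, fst_gaussExt_iterate] at hinv
    linarith
  have hsnd (n : ℕ) : (gaussExt^[n] (x, y)).2 = gaussMap^[n] y := by
    induction n with
    | zero => rfl
    | succ n ih =>
      rw [iterate_succ_apply', iterate_succ_apply', ← ih, gaussMap, Int.fract, hfloor,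
        gaussExt, fst_gaussExt_iterate]
  refine hne (cfTerm_injective (funext fun n => ?_))
  rw [cfTerm_eq_floor_iterate, cfTerm_eq_floor_iterate, ← hfloor, hsnd]

lemma exists_forall_ge_isReducedPair {x y : ℝ} (hx : Irrational x) (hy : Irrational y)
    (hne : x ≠ y) : ∃ N, ∀ n ≥ N, IsReducedPair (gaussExt^[n] (x, y)) := by
  obtain ⟨N, hN⟩ := exists_snd_gaussExt_iterate_neg hx hy hne
  have hirr (n : ℕ) : Irrational (gaussExt^[n] (x, y)).1 := by
    rw [fst_gaussExt_iterate]
    exact irrational_gaussMap_iterate hx n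
  refine ⟨N + 2, fun n hn => ?_⟩
  induction n, hn using Nat.le_induction with
  | base =>
    rw [iterate_succ_apply']
    refine isReducedPair_gaussExt (hirr _) ?_ hN
    rw [fst_gaussExt_iterate, iterate_succ_apply']
    exact one_lt_gaussMap (irrational_gaussMap_iterate hx N)
  | succ n _ ih =>
    rw [iterate_succ_apply']
    exact isReducedPair_gaussExt (hirr n) ih.1 ih.2.2

end NaturalExtension

section Forms

variable {f g h : ℤ × ℤ × ℤ} {a b c d : ℤ}

/-- The binary quadratic form `f(ax + by, cx + dy)` obtained from `f` by a linear substitution,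
in coordinates `(m, n, k)`. -/
def formSubst (f : ℤ × ℤ × ℤ) (a b c d : ℤ) : ℤ × ℤ × ℤ :=
  (qval f a c, qval f b d, 2 * f.1 * a * b + 2 * f.2.1 * c * d + f.2.2 * (a * d + b * c))

lemma qval_formSubst (f : ℤ × ℤ × ℤ) (a b c d x y : ℤ) :
    qval (formSubst f a b c d) x y = qval f (a * x + b * y) (c * x + d * y) := by
  simp only [qval, formSubst]
  ring

lemma qval_injective : Injective qval := by
  intro f g hfg
  have hm := congrFun₂ hfg 1 0
  have hn := congrFun₂ hfg 0 1
  have hk := congrFun₂ hfg 1 1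
  simp only [qval] at hm hn hk
  exact Prod.ext (by linarith) (Prod.ext (by linarith) (by linarith))

lemma formSubst_one (f : ℤ × ℤ × ℤ) : formSubst f 1 0 0 1 = f := by
  simp [formSubst, qval]

lemma formSubst_neg (f : ℤ × ℤ × ℤ) (a b c d : ℤ) :
    formSubst f (-a) (-b) (-c) (-d) = formSubst f a b c d := by
  simp only [formSubst, qval, Prod.mk.injEq]
  refine ⟨?_, ?_, ?_⟩ <;> ring

lemma neg_formSubst (f : ℤ × ℤ × ℤ) (a b c d : ℤ) :
    formSubst (-f) a b c d = -formSubst f a b c d := by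
  simp only [formSubst, qval, Prod.neg_mk, Prod.fst_neg, Prod.snd_neg, Prod.mk.injEq]
  refine ⟨?_, ?_, ?_⟩ <;> ring

lemma formSubst_formSubst (f : ℤ × ℤ × ℤ) (a b c d a' b' c' d' : ℤ) :
    formSubst (formSubst f a b c d) a' b' c' d' =
      formSubst f (a * a' + b * c') (a * b' + b * d') (c * a' + d * c') (c * b' + d * d') := by
  simp only [formSubst, qval, Prod.mk.injEq]
  refine ⟨?_, ?_, ?_⟩ <;> ring

lemma formSubst_formSubst_inv (f : ℤ × ℤ × ℤ) (hdet : a * d - b * c = 1) :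
    formSubst (formSubst f a b c d) d (-b) (-c) a = f := by
  rw [formSubst_formSubst]
  convert formSubst_one f using 2 <;> linarith

lemma formDisc_formSubst (f : ℤ × ℤ × ℤ) (a b c d : ℤ) :
    formDisc (formSubst f a b c d) = (a * d - b * c) ^ 2 * formDisc f := by
  simp only [formDisc, formSubst, qval]
  ring

lemma formDisc_neg (f : ℤ × ℤ × ℤ) : formDisc (-f) = formDisc f := by
  simp only [formDisc, Prod.fst_neg, Prod.snd_neg]
  ring

lemma sLEquiv_formSubst (f : ℤ × ℤ × ℤ) (hdet : a * d - b * c = 1) :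
    SLEquiv f (formSubst f a b c d) :=
  ⟨a, b, c, d, hdet, qval_formSubst f a b c d⟩

lemma sLEquiv_formSubst_upper (f : ℤ × ℤ × ℤ) (a : ℤ) : SLEquiv f (formSubst f 1 a 0 1) :=
  sLEquiv_formSubst f (by ring)

lemma sLEquiv_formSubst_lower (f : ℤ × ℤ × ℤ) (b : ℤ) : SLEquiv f (formSubst f 1 0 b 1) :=
  sLEquiv_formSubst f (by ring)

namespace SLEquiv

lemma exists_formSubst_eq (hfg : SLEquiv f g) :
    ∃ a b c d, a * d - b * c = 1 ∧ formSubst f a b c d = g := by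
  obtain ⟨a, b, c, d, hdet, hg⟩ := hfg
  refine ⟨a, b, c, d, hdet, qval_injective (funext₂ fun x y => ?_)⟩
  rw [qval_formSubst, hg]

lemma refl (f : ℤ × ℤ × ℤ) : SLEquiv f f := by
  simpa only [formSubst_one] using sLEquiv_formSubst_upper f 0

lemma symm (hfg : SLEquiv f g) : SLEquiv g f := by
  obtain ⟨a, b, c, d, hdet, rfl⟩ := hfg.exists_formSubst_eq
  simpa only [formSubst_formSubst_inv f hdet] using sLEquiv_formSubst (formSubst f a b c d)
    (show d * a - -b * -c = 1 by linarith)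

lemma trans (hfg : SLEquiv f g) (hgh : SLEquiv g h) : SLEquiv f h := by
  obtain ⟨a, b, c, d, hdet, rfl⟩ := hfg.exists_formSubst_eq
  obtain ⟨a', b', c', d', hdet', rfl⟩ := hgh.exists_formSubst_eq
  rw [formSubst_formSubst]
  exact sLEquiv_formSubst f (by linear_combination hdet + (a * d - b * c) * hdet')

lemma formDisc_eq (hfg : SLEquiv f g) : formDisc g = formDisc f := by
  obtain ⟨a, b, c, d, hdet, rfl⟩ := hfg.exists_formSubst_eq
  rw [formDisc_formSubst, hdet, one_pow, one_mul]

end SLEquiv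

lemma sLEquiv_iterate {T : ℤ × ℤ × ℤ → ℤ × ℤ × ℤ} (hT : ∀ f, SLEquiv f (T f))
    (f : ℤ × ℤ × ℤ) (n : ℕ) : SLEquiv f (T^[n] f) :=
  Iterate.rec (SLEquiv f) (SLEquiv.refl f) (fun g hfg => hfg.trans (hT g)) n

lemma fst_ne_zero_of_not_isSquare (hsq : ¬ IsSquare (formDisc f)) : f.1 ≠ 0 := by
  intro hm
  refine hsq ⟨f.2.2, ?_⟩
  rw [formDisc, hm]
  ring

lemma qval_ne_zero_of_isCoprime (hsq : ¬ IsSquare (formDisc f)) {x y : ℤ} (hxy : IsCoprime x y) :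
    qval f x y ≠ 0 := by
  obtain ⟨u, v, huv⟩ := hxy
  have hequiv : SLEquiv f (formSubst f x (-v) y u) := sLEquiv_formSubst f (by linarith)
  exact fst_ne_zero_of_not_isSquare (hequiv.formDisc_eq.symm ▸ hsq)

end Forms

section Roots

variable {f g : ℤ × ℤ × ℤ} {a b c d : ℤ}

lemma xiMinus_eq_xiPlus_neg (f : ℤ × ℤ × ℤ) : xiMinus f = xiPlus (-f) := by
  rw [xiMinus, xiPlus, formDisc_neg, ← neg_div_neg_eq]
  push_cast [Prod.fst_neg, Prod.snd_neg]
  ring_nf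

lemma fst_ne_zero_of_irrational (hirr : Irrational √(formDisc f : ℝ)) : f.1 ≠ 0 :=
  fst_ne_zero_of_not_isSquare (irrational_sqrt_intCast_iff.1 hirr).1

lemma irrational_xiPlus (hirr : Irrational √(formDisc f : ℝ)) : Irrational (xiPlus f) := by
  have h := (hirr.intCast_add (-f.2.2)).div_intCast
    (mul_ne_zero two_ne_zero (fst_ne_zero_of_irrational hirr))
  push_cast at h
  exact h

lemma irrational_xiMinus (hirr : Irrational √(formDisc f : ℝ)) : Irrational (xiMinus f) := by
  rw [xiMinus_eq_xiPlus_neg]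
  exact irrational_xiPlus (formDisc_neg f ▸ hirr)

lemma sq_sqrt_formDisc (hdisc : 0 ≤ formDisc f) :
    √(formDisc f : ℝ) ^ 2 = (f.2.2 : ℝ) ^ 2 - 4 * f.1 * f.2.1 := by
  rw [Real.sq_sqrt (mod_cast hdisc)]
  push_cast [formDisc]
  ring

lemma qval_eq_mul_roots (hm : f.1 ≠ 0) (hdisc : 0 ≤ formDisc f) (x y : ℤ) :
    (qval f x y : ℝ) = f.1 * (x - xiPlus f * y) * (x - xiMinus f * y) := by
  have hmR : (f.1 : ℝ) ≠ 0 := mod_cast hm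
  have hsqrt := sq_sqrt_formDisc hdisc
  rw [xiPlus, xiMinus]
  field_simp
  push_cast [qval]
  linear_combination (y : ℝ) ^ 2 * hsqrt

lemma two_mul_fst_mul_xiPlus (hm : f.1 ≠ 0) :
    2 * f.1 * xiPlus f + f.2.2 = √(formDisc f : ℝ) := by
  have hmR : (f.1 : ℝ) ≠ 0 := mod_cast hm
  rw [xiPlus]
  field_simp
  ring

lemma xiPlus_is_root (hm : f.1 ≠ 0) (hdisc : 0 ≤ formDisc f) :
    f.1 * xiPlus f ^ 2 + f.2.2 * xiPlus f + f.2.1 = 0 := by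
  have hmR : (f.1 : ℝ) ≠ 0 := mod_cast hm
  have hsqrt := sq_sqrt_formDisc hdisc
  refine mul_left_cancel₀ (mul_ne_zero four_ne_zero hmR) ?_
  rw [← two_mul_fst_mul_xiPlus hm] at hsqrt
  linear_combination hsqrt

lemma xiPlus_formSubst (hirr : Irrational √(formDisc f : ℝ)) (hdet : a * d - b * c = 1) :
    xiPlus (formSubst f a b c d) = (d * xiPlus f - b) / (a - c * xiPlus f) := by
  have hdisc : formDisc (formSubst f a b c d) = formDisc f := (sLEquiv_formSubst f hdet).formDisc_eq
  have hm : f.1 ≠ 0 := fst_ne_zero_of_irrational hirr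
  have hm' : (formSubst f a b c d).1 ≠ 0 := fst_ne_zero_of_irrational (hdisc.symm ▸ hirr)
  have hden : a - c * xiPlus f ≠ 0 := by
    rcases eq_or_ne c 0 with rfl | hc
    · have ha : a ≠ 0 := by rintro rfl; simp at hdet
      simpa using ha
    · exact (((irrational_xiPlus hirr).intCast_mul hc).intCast_sub a).ne_zero
  have hroot := xiPlus_is_root hm (irrational_sqrt_intCast_iff.1 hirr).2
  have hsqrt : 2 * (formSubst f a b c d).1 * xiPlus (formSubst f a b c d) +
      (formSubst f a b c d).2.2 = 2 * f.1 * xiPlus f + f.2.2 := by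
    rw [two_mul_fst_mul_xiPlus hm', two_mul_fst_mul_xiPlus hm, hdisc]
  have hdetR : (a * d - b * c : ℝ) = 1 := mod_cast hdet
  rw [eq_div_iff hden]
  refine mul_left_cancel₀ (mul_ne_zero two_ne_zero (Int.cast_ne_zero.2 hm')) ?_
  generalize xiPlus (formSubst f a b c d) = η at *
  simp only [formSubst, qval] at hsqrt ⊢
  push_cast at hsqrt ⊢
  linear_combination (a - c * xiPlus f) * hsqrt - 2 * c * (a * d - b * c) * hroot -
    (2 * f.1 * xiPlus f + f.2.2) * (a - c * xiPlus f) * hdetR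

lemma xiPlus_formSubst_upper (hirr : Irrational √(formDisc f : ℝ)) (a : ℤ) :
    xiPlus (formSubst f 1 a 0 1) = xiPlus f - a := by
  rw [xiPlus_formSubst hirr (by ring)]
  simp

lemma xiPlus_formSubst_lower (hirr : Irrational √(formDisc f : ℝ)) (b : ℤ) :
    xiPlus (formSubst f 1 0 b 1) = ((xiPlus f)⁻¹ - b)⁻¹ := by
  have hne : xiPlus f ≠ 0 := (irrational_xiPlus hirr).ne_zero
  rw [xiPlus_formSubst hirr (by ring)]
  field_simp
  simp

lemma xiMinus_formSubst_upper (hirr : Irrational √(formDisc f : ℝ)) (a : ℤ) :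
    xiMinus (formSubst f 1 a 0 1) = xiMinus f - a := by
  rw [xiMinus_eq_xiPlus_neg, xiMinus_eq_xiPlus_neg, ← neg_formSubst,
    xiPlus_formSubst_upper (formDisc_neg f ▸ hirr)]

lemma xiMinus_formSubst_lower (hirr : Irrational √(formDisc f : ℝ)) (b : ℤ) :
    xiMinus (formSubst f 1 0 b 1) = ((xiMinus f)⁻¹ - b)⁻¹ := by
  rw [xiMinus_eq_xiPlus_neg, xiMinus_eq_xiPlus_neg, ← neg_formSubst,
    xiPlus_formSubst_lower (formDisc_neg f ▸ hirr)]

lemma eq_of_xiPlus_eq (hirr : Irrational √(formDisc f : ℝ)) (hdisc : formDisc f = formDisc g)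
    (hxi : xiPlus f = xiPlus g) : f = g := by
  have hm : (f.1 : ℝ) ≠ 0 := mod_cast fst_ne_zero_of_irrational hirr
  have hm' : (g.1 : ℝ) ≠ 0 := mod_cast fst_ne_zero_of_irrational (hdisc ▸ hirr)
  rw [xiPlus, xiPlus, ← hdisc, div_eq_div_iff (by positivity) (by positivity)] at hxi
  have hfst : f.1 = g.1 := by
    by_contra hne
    refine (hirr.intCast_mul (sub_ne_zero.2 hne)).ne_int (f.1 * g.2.2 - g.1 * f.2.2) ?_
    push_cast
    linear_combination -hxi / 2
  have hsnd : f.2.2 = g.2.2 := by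
    rw [hfst] at hxi
    exact_mod_cast (show (f.2.2 : ℝ) = g.2.2 by linarith [mul_right_cancel₀ (by positivity) hxi])
  refine Prod.ext hfst (Prod.ext ?_ hsnd)
  rw [formDisc, formDisc, hfst, hsnd] at hdisc
  exact mul_left_cancel₀ (fst_ne_zero_of_irrational hirr) (by rw [hfst]; linarith)

lemma xiPlus_sub_xiMinus (f : ℤ × ℤ × ℤ) : xiPlus f - xiMinus f = √(formDisc f : ℝ) / f.1 := by
  rw [xiPlus, xiMinus]
  ring

end Roots

section River

variable {f g : ℤ × ℤ × ℤ} {a b c d : ℤ}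

/-- `f` lies on Conway's river: its values at the basis vectors `(1, 0)` and `(0, 1)` are
respectively positive and negative. -/
def OnRiver (f : ℤ × ℤ × ℤ) : Prop := 0 < f.1 ∧ f.2.1 < 0

/-- The forms on Conway's river that are equivalent to `f`. -/
def river (f : ℤ × ℤ × ℤ) : Set (ℤ × ℤ × ℤ) := {g | SLEquiv f g ∧ OnRiver g}

/-- The step of an indefinite form along Conway's river: of the two ways of replacing one basis
vector by `(1, 1)`, it takes the one that keeps the form on the river. -/
def riverStep (f : ℤ × ℤ × ℤ) : ℤ × ℤ × ℤ :=
  if qval f 1 1 < 0 then formSubst f 1 1 0 1 else formSubst f 1 0 1 1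

lemma river_eq_of_sLEquiv (hfg : SLEquiv f g) : river f = river g :=
  Set.ext fun _ => and_congr_left fun _ => ⟨hfg.symm.trans, hfg.trans⟩

lemma riverStep_of_neg (h : qval f 1 1 < 0) : riverStep f = formSubst f 1 1 0 1 := if_pos h

lemma riverStep_of_nonneg (h : 0 ≤ qval f 1 1) : riverStep f = formSubst f 1 0 1 1 :=
  if_neg h.not_gt

lemma sLEquiv_riverStep (f : ℤ × ℤ × ℤ) : SLEquiv f (riverStep f) := by
  rw [riverStep]
  split_ifs
  exacts [sLEquiv_formSubst_upper f 1, sLEquiv_formSubst_lower f 1]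

lemma onRiver_riverStep (hsq : ¬ IsSquare (formDisc f)) (hf : OnRiver f) :
    OnRiver (riverStep f) := by
  obtain ⟨hm, hn⟩ := hf
  have hne : qval f 1 1 ≠ 0 := qval_ne_zero_of_isCoprime hsq isCoprime_one_left
  rcases lt_or_ge (qval f 1 1) 0 with h | h
  · rw [riverStep_of_neg h]
    exact ⟨by simpa [formSubst, qval] using hm, h⟩
  · rw [riverStep_of_nonneg h]
    exact ⟨h.lt_of_ne' hne, by simpa [formSubst, qval] using hn⟩

lemma mapsTo_riverStep (hsq : ¬ IsSquare (formDisc f)) :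
    Set.MapsTo riverStep (river f) (river f) := fun g hg =>
  ⟨hg.1.trans (sLEquiv_riverStep g), onRiver_riverStep (hg.1.formDisc_eq ▸ hsq) hg.2⟩

/- The sign of the value at `(1, -1)` tells which of the two substitutions has been made. -/
lemma injOn_riverStep : Set.InjOn riverStep {f | OnRiver f} := by
  rintro f ⟨hm, hn⟩ g ⟨hm', hn'⟩ h
  simp only [riverStep, formSubst, qval] at h
  split_ifs at h <;> rw [Prod.mk.injEq, Prod.mk.injEq] at h <;>
    exact Prod.ext (by lia) (Prod.ext (by lia) (by lia))

lemma qval_eq_add_qval_one_one (f : ℤ × ℤ × ℤ) (x y : ℤ) :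
    qval f x y = f.1 * (x * (x - y)) - f.2.1 * (y * (x - y)) + qval f 1 1 * (x * y) := by
  simp only [qval]
  ring

lemma qval_nonneg_of_le (hf : OnRiver f) (h : 0 ≤ qval f 1 1) {x y : ℤ} (hy : 0 ≤ y)
    (hyx : y ≤ x) : 0 ≤ qval f x y := by
  have hx : 0 ≤ x := hy.trans hyx
  have hsub : 0 ≤ x - y := sub_nonneg.2 hyx
  have hm := mul_nonneg hf.1.le (mul_nonneg hx hsub)
  have hn := mul_nonneg (neg_nonneg.2 hf.2.le) (mul_nonneg hy hsub)
  have hone := mul_nonneg h (mul_nonneg hx hy)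
  rw [qval_eq_add_qval_one_one]
  linarith

lemma qval_nonpos_of_le (hf : OnRiver f) (h : qval f 1 1 ≤ 0) {x y : ℤ} (hx : 0 ≤ x)
    (hxy : x ≤ y) : qval f x y ≤ 0 := by
  have hy : 0 ≤ y := hx.trans hxy
  have hsub : 0 ≤ y - x := sub_nonneg.2 hxy
  have hm := mul_nonneg hf.1.le (mul_nonneg hx hsub)
  have hn := mul_nonneg (neg_nonneg.2 hf.2.le) (mul_nonneg hy hsub)
  have hone := mul_nonneg (neg_nonneg.2 h) (mul_nonneg hx hy)
  rw [qval_eq_add_qval_one_one]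
  linarith

lemma eq_one_or_row_le (ha : 0 ≤ a) (hb : 0 ≤ b) (hc : 0 ≤ c) (hd : 0 ≤ d)
    (hdet : a * d - b * c = 1) :
    (a = 1 ∧ b = 0 ∧ c = 0 ∧ d = 1) ∨ (c ≤ a ∧ d ≤ b) ∨ (a ≤ c ∧ b ≤ d) := by
  by_contra! ⟨hone, hupper, hlower⟩
  rcases lt_or_ge c a with hca | hac
  · have hbd : b < d := hupper hca.le
    have hprod : (c + 1) * (b + 1) ≤ a * d := mul_le_mul hca hbd (by positivity) ha
    obtain rfl : b = 0 := by linarith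
    obtain rfl : c = 0 := by linarith
    have had : a * d = 1 := by linarith
    have ha_one : a = 1 := Int.eq_one_of_mul_eq_one_right ha had
    exact hone ha_one rfl rfl (Int.eq_one_of_mul_eq_one_left hd had)
  · have hprod : a * d ≤ c * b := mul_le_mul hac (hlower hac).le hd hc
    linarith

/- A nonnegative matrix of determinant one is a product of elementary ones, which the Euclidean
algorithm on its rows peels off; the sign of `f(1, 1)` decides which elementary factor comes
first, since `f` is positive on the first column and negative on the second. -/
lemma exists_riverStep_iterate_eq_formSubst {f : ℤ × ℤ × ℤ} {a b c d : ℤ}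
    (hsq : ¬ IsSquare (formDisc f)) (hf : OnRiver f) (ha : 0 ≤ a) (hb : 0 ≤ b) (hc : 0 ≤ c)
    (hd : 0 ≤ d) (hdet : a * d - b * c = 1) (hg : OnRiver (formSubst f a b c d)) :
    ∃ j, riverStep^[j] f = formSubst f a b c d := by
  have hsq' : ¬ IsSquare (formDisc (riverStep f)) := (sLEquiv_riverStep f).formDisc_eq.symm ▸ hsq
  have had : a * d ≠ 0 := (show 0 < a * d by linarith [mul_nonneg hb hc]).ne'
  have ha_pos : 0 < a := ha.lt_of_ne' (left_ne_zero_of_mul had)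
  have hd_pos : 0 < d := hd.lt_of_ne' (right_ne_zero_of_mul had)
  rcases eq_one_or_row_le ha hb hc hd hdet with ⟨rfl, rfl, rfl, rfl⟩ | ⟨hca, hdb⟩ | ⟨hac, hbd⟩
  · exact ⟨0, (formSubst_one f).symm⟩
  · have hneg : qval f 1 1 < 0 := by
      by_contra! h
      exact (qval_nonneg_of_le hf h hd hdb).not_gt hg.2
    have hfactor : formSubst f a b c d = formSubst (riverStep f) (a - c) (b - d) c d := by
      rw [riverStep_of_neg hneg, formSubst_formSubst]
      ring_nf
    rw [hfactor] at hg ⊢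
    obtain ⟨j, hj⟩ := exists_riverStep_iterate_eq_formSubst hsq' (onRiver_riverStep hsq hf)
      (sub_nonneg.2 hca) (sub_nonneg.2 hdb) hc hd (by linarith) hg
    exact ⟨j + 1, hj⟩
  · have hnonneg : 0 ≤ qval f 1 1 := by
      by_contra! h
      exact (qval_nonpos_of_le hf h.le ha hac).not_gt hg.1
    have hfactor : formSubst f a b c d = formSubst (riverStep f) a b (c - a) (d - b) := by
      rw [riverStep_of_nonneg hnonneg, formSubst_formSubst]
      ring_nf
    rw [hfactor] at hg ⊢
    obtain ⟨j, hj⟩ := exists_riverStep_iterate_eq_formSubst hsq' (onRiver_riverStep hsq hf)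
      ha hb (sub_nonneg.2 hac) (sub_nonneg.2 hbd) (by linarith) hg
    exact ⟨j + 1, hj⟩
termination_by (a + b + c + d).toNat

lemma mul_pos_of_onRiver_formSubst (hf : OnRiver f) (hdet : a * d - b * c = 1)
    (hg : OnRiver (formSubst f a b c d)) : 0 < a * d := by
  obtain ⟨hm, hn⟩ := hf
  obtain ⟨hu, hv⟩ : 0 < qval f a c ∧ qval f b d < 0 := hg
  by_contra! had
  have hbc : b * c < 0 := by linarith
  have hb : b ≠ 0 := by rintro rfl; simp at hbc
  have hd : d ≠ 0 := by
    rintro rfl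
    exact hv.not_ge (by simpa [qval] using mul_nonneg hm.le (sq_nonneg b))
  /- Eliminate the middle coefficient of `f` between `f(a, c)` and `f(b, d)`; if `ad ≤ 0`, the two
  sides have opposite signs. -/
  have hidentity : (b * d) ^ 2 * qval f a c - (a * d) * (b * c) * qval f b d =
      b ^ 2 * (a * d * f.1) - d ^ 2 * (b * c * f.2.1) := by
    simp only [qval]
    linear_combination (a * b ^ 2 * d * f.1 - b * c * d ^ 2 * f.2.1) * hdet
  have hu' : 0 < (b * d) ^ 2 * qval f a c := by positivity
  have hv' : a * d * (b * c) * qval f b d ≤ 0 :=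
    mul_nonpos_of_nonneg_of_nonpos (mul_nonneg_of_nonpos_of_nonpos had hbc.le) hv.le
  have hm' : b ^ 2 * (a * d * f.1) ≤ 0 :=
    mul_nonpos_of_nonneg_of_nonpos (sq_nonneg b) (mul_nonpos_of_nonpos_of_nonneg had hm.le)
  have hn' : 0 ≤ d ^ 2 * (b * c * f.2.1) :=
    mul_nonneg (sq_nonneg d) (mul_nonneg_of_nonpos_of_nonpos hbc.le hn.le)
  linarith

lemma exists_formSubst_eq_of_pos (hf : OnRiver f) (hg : g ∈ river f) :
    ∃ a b c d, 0 < a ∧ 0 < d ∧ a * d - b * c = 1 ∧ formSubst f a b c d = g := by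
  obtain ⟨a, b, c, d, hdet, rfl⟩ := hg.1.exists_formSubst_eq
  rcases mul_pos_iff.1 (mul_pos_of_onRiver_formSubst hf hdet hg.2) with ⟨ha, hd⟩ | ⟨ha, hd⟩
  · exact ⟨a, b, c, d, ha, hd, hdet, rfl⟩
  · exact ⟨-a, -b, -c, -d, neg_pos.2 ha, neg_pos.2 hd, by linarith, formSubst_neg f a b c d⟩

lemma exists_riverStep_iterate_eq_or (hsq : ¬ IsSquare (formDisc f)) (hf : OnRiver f)
    (hg : g ∈ river f) : (∃ j, riverStep^[j] f = g) ∨ ∃ j, riverStep^[j] g = f := by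
  obtain ⟨a, b, c, d, ha, hd, hdet, rfl⟩ := exists_formSubst_eq_of_pos hf hg
  have hbc : 0 ≤ b * c := by linarith [mul_pos ha hd]
  rcases mul_nonneg_iff.1 hbc with ⟨hb, hc⟩ | ⟨hb, hc⟩
  · exact .inl (exists_riverStep_iterate_eq_formSubst hsq hf ha.le hb hc hd.le hdet hg.2)
  · have hinv := formSubst_formSubst_inv f hdet
    have hback := exists_riverStep_iterate_eq_formSubst (hg.1.formDisc_eq.symm ▸ hsq) hg.2
      hd.le (neg_nonneg.2 hb) (neg_nonneg.2 hc) ha.le (by linarith) (hinv.symm ▸ hf)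
    rw [hinv] at hback
    exact .inr hback

end River

section InducedMap

/- `S` is the first return map of `T` to `A`, with return time `r`. -/
variable {α : Type*} {T S : α → α} {r : α → ℕ} {A : Set α} {x : α}

lemma iterate_birkhoffSum_eq_iterate (hS : Set.MapsTo S A A) (hT : ∀ y ∈ A, T^[r y] y = S y)
    (hx : x ∈ A) (n : ℕ) : T^[birkhoffSum S r n x] x = S^[n] x := by
  induction n with
  | zero => rfl
  | succ n ih =>
    rw [birkhoffSum_succ, add_comm, iterate_add_apply, ih, hT _ (hS.iterate n hx),
      iterate_succ_apply']

lemma birkhoffSum_pos_of_mapsTo (hS : Set.MapsTo S A A) (hr : ∀ y ∈ A, 0 < r y) (hx : x ∈ A)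
    {n : ℕ} (hn : 0 < n) : 0 < birkhoffSum S r n x :=
  Finset.sum_pos (fun i _ => hr _ (hS.iterate i hx)) (Finset.nonempty_range_iff.2 hn.ne')

lemma mem_periodicPts_of_induced (hS : Set.MapsTo S A A) (hT : ∀ y ∈ A, T^[r y] y = S y)
    (hr : ∀ y ∈ A, 0 < r y) (hx : x ∈ A) (hper : x ∈ periodicPts S) : x ∈ periodicPts T := by
  obtain ⟨n, hn, hSn⟩ := hper
  exact ⟨birkhoffSum S r n x, birkhoffSum_pos_of_mapsTo hS hr hx hn,
    (iterate_birkhoffSum_eq_iterate hS hT hx n).trans hSn⟩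

lemma exists_eq_birkhoffSum_of_iterate_mem (hS : Set.MapsTo S A A)
    (hT : ∀ y ∈ A, T^[r y] y = S y) (hr : ∀ y ∈ A, 0 < r y)
    (hfirst : ∀ y ∈ A, ∀ l, 0 < l → l < r y → T^[l] y ∉ A) (hx : x ∈ A) {q : ℕ}
    (hq : T^[q] x ∈ A) : ∃ n, q = birkhoffSum S r n x := by
  induction q using Nat.strong_induction_on generalizing x with
  | _ q ih =>
    rcases lt_or_ge q (r x) with hlt | hge
    · obtain rfl : q = 0 := by
        by_contra hne
        exact hfirst x hx q (Nat.pos_of_ne_zero hne) hlt hq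
      exact ⟨0, rfl⟩
    · rw [← Nat.sub_add_cancel hge, iterate_add_apply, hT x hx] at hq
      obtain ⟨n, hn⟩ := ih (q - r x) (Nat.sub_lt_self (hr x hx) hge) (hS hx) hq
      exact ⟨n + 1, by rw [birkhoffSum_succ', ← hn, Nat.add_sub_cancel' hge]⟩

lemma minimalPeriod_eq_birkhoffSum_induced (hS : Set.MapsTo S A A)
    (hT : ∀ y ∈ A, T^[r y] y = S y) (hr : ∀ y ∈ A, 0 < r y)
    (hfirst : ∀ y ∈ A, ∀ l, 0 < l → l < r y → T^[l] y ∉ A) (hx : x ∈ A)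
    (hper : x ∈ periodicPts S) :
    minimalPeriod T x = birkhoffSum S r (minimalPeriod S x) x := by
  have hpos : 0 < minimalPeriod T x :=
    minimalPeriod_pos_of_mem_periodicPts (mem_periodicPts_of_induced hS hT hr hx hper)
  have hreturn (n : ℕ) : IsPeriodicPt T (birkhoffSum S r n x) x ↔ IsPeriodicPt S n x := by
    rw [IsPeriodicPt, IsFixedPt, iterate_birkhoffSum_eq_iterate hS hT hx]
    rfl
  obtain ⟨n, hn⟩ := exists_eq_birkhoffSum_of_iterate_mem hS hT hr hfirst hx
    (show T^[minimalPeriod T x] x ∈ A by rwa [iterate_minimalPeriod])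
  have hn_pos : 0 < n := Nat.pos_of_ne_zero (by rintro rfl; exact hpos.ne' hn)
  have hn_per : IsPeriodicPt S n x := (hreturn n).1 (hn ▸ isPeriodicPt_minimalPeriod T x)
  have hmono : birkhoffSum S r (minimalPeriod S x) x ≤ birkhoffSum S r n x :=
    Finset.sum_le_sum_of_subset (Finset.range_mono (hn_per.minimalPeriod_le hn_pos))
  refine le_antisymm ?_ (hn ▸ hmono)
  exact ((hreturn _).2 (isPeriodicPt_minimalPeriod S x)).minimalPeriod_le
    (birkhoffSum_pos_of_mapsTo hS hr hx (minimalPeriod_pos_of_mem_periodicPts hper))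

lemma ncard_setOf_iterate_eq (hx : x ∈ periodicPts T) :
    {y | ∃ j, T^[j] x = y}.ncard = minimalPeriod T x := by
  have himage : {y | ∃ j, T^[j] x = y} = (T^[·] x) '' Set.Iio (minimalPeriod T x) := by
    ext y
    refine ⟨?_, fun ⟨j, _, hj⟩ => ⟨j, hj⟩⟩
    rintro ⟨j, rfl⟩
    exact ⟨j % minimalPeriod T x, Nat.mod_lt _ (minimalPeriod_pos_of_mem_periodicPts hx),
      iterate_mod_minimalPeriod_eq⟩
  rw [himage, iterate_injOn_Iio_minimalPeriod.ncard_image, Set.ncard_Iio_nat]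

lemma exists_iterate_eq_of_injOn (hT : Set.MapsTo T A A) (hinj : Set.InjOn T A) (hx : x ∈ A)
    (hper : x ∈ periodicPts T) {y : α} (hy : y ∈ A) {j : ℕ} (hj : T^[j] y = x) :
    ∃ i, T^[i] x = y := by
  obtain ⟨n, hn, hTn⟩ := hper
  refine ⟨j * n - j, hinj.iterate hT j (hT.iterate _ hx) hy ?_⟩
  rw [← iterate_add_apply, Nat.add_sub_cancel' (Nat.le_mul_of_pos_right j hn), hj]
  exact hTn.const_mul j

end InducedMap

section ReducedForms

variable {f g : ℤ × ℤ × ℤ}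

/-- The pair `(ξ⁺, ξ⁻)` of roots of a form. -/
noncomputable def rootPair (f : ℤ × ℤ × ℤ) : ℝ × ℝ := (xiPlus f, xiMinus f)

/-- Two steps of the continued fraction algorithm, carried out on the form `f` instead of its root
`ξ⁺`: a single step `ξ ↦ 1 / (ξ - ⌊ξ⌋)` is a substitution of determinant `-1`. -/
noncomputable def cfStep (f : ℤ × ℤ × ℤ) : ℤ × ℤ × ℤ :=
  formSubst (formSubst f 1 ⌊xiPlus f⌋ 0 1) 1 0 ⌊gaussMap (xiPlus f)⌋ 1

/-- The indefinite forms with irrational roots for which the continued fraction of `ξ⁺` is purely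
periodic. -/
def reducedForms : Set (ℤ × ℤ × ℤ) :=
  {f | Irrational √(formDisc f : ℝ) ∧ IsReducedPair (rootPair f)}

lemma sLEquiv_cfStep (f : ℤ × ℤ × ℤ) : SLEquiv f (cfStep f) :=
  (sLEquiv_formSubst_upper f _).trans (sLEquiv_formSubst_lower _ _)

lemma formDisc_cfStep_iterate (f : ℤ × ℤ × ℤ) (i : ℕ) : formDisc (cfStep^[i] f) = formDisc f :=
  (sLEquiv_iterate sLEquiv_cfStep f i).formDisc_eq

lemma rootPair_cfStep (hirr : Irrational √(formDisc f : ℝ)) :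
    rootPair (cfStep f) = gaussExt^[2] (rootPair f) := by
  have hirr' : Irrational √(formDisc (formSubst f 1 ⌊xiPlus f⌋ 0 1) : ℝ) :=
    (sLEquiv_formSubst_upper f _).formDisc_eq ▸ hirr
  refine Prod.ext ?_ ?_
  · rw [rootPair, cfStep, xiPlus_formSubst_lower hirr', xiPlus_formSubst_upper hirr]
    rfl
  · rw [rootPair, cfStep, xiMinus_formSubst_lower hirr', xiMinus_formSubst_upper hirr]
    rfl

lemma rootPair_cfStep_iterate (hirr : Irrational √(formDisc f : ℝ)) (i : ℕ) :
    rootPair (cfStep^[i] f) = gaussExt^[2 * i] (rootPair f) := by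
  induction i with
  | zero => rfl
  | succ i ih =>
    rw [iterate_succ_apply', rootPair_cfStep (formDisc_cfStep_iterate f i ▸ hirr), ih,
      ← iterate_add_apply, mul_add_one, add_comm]

lemma xiPlus_cfStep_iterate (hirr : Irrational √(formDisc f : ℝ)) (i : ℕ) :
    xiPlus (cfStep^[i] f) = gaussMap^[2 * i] (xiPlus f) := by
  have hfst := fst_gaussExt_iterate (rootPair f) (2 * i)
  rwa [← rootPair_cfStep_iterate hirr] at hfst

lemma isPeriodicPt_cfStep_iff (hirr : Irrational √(formDisc f : ℝ)) {i : ℕ} :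
    IsPeriodicPt cfStep i f ↔ IsPeriodicPt gaussMap^[2] i (xiPlus f) := by
  rw [IsPeriodicPt, IsFixedPt, IsPeriodicPt, IsFixedPt, ← iterate_mul,
    ← xiPlus_cfStep_iterate hirr]
  exact ⟨congrArg xiPlus,
    eq_of_xiPlus_eq (formDisc_cfStep_iterate f i ▸ hirr) (formDisc_cfStep_iterate f i)⟩

lemma minimalPeriod_cfStep (hirr : Irrational √(formDisc f : ℝ))
    (hper : xiPlus f ∈ periodicPts gaussMap) :
    2 * minimalPeriod cfStep f = Nat.lcm 2 (minimalPeriod gaussMap (xiPlus f)) := by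
  rw [minimalPeriod_eq_minimalPeriod_iff.2 fun _ => isPeriodicPt_cfStep_iff hirr,
    minimalPeriod_iterate_eq_div_gcd' hper, Nat.lcm, Nat.gcd_comm 2,
    Nat.mul_div_assoc 2 (Nat.gcd_dvd_left _ _)]

lemma xiPlus_ne_xiMinus (hirr : Irrational √(formDisc f : ℝ)) : xiPlus f ≠ xiMinus f := by
  rw [← sub_ne_zero, xiPlus_sub_xiMinus]
  exact div_ne_zero hirr.ne_zero (mod_cast fst_ne_zero_of_irrational hirr)

lemma exists_forall_ge_cfStep_iterate_mem_reducedForms (hirr : Irrational √(formDisc f : ℝ)) :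
    ∃ N, ∀ i ≥ N, cfStep^[i] f ∈ reducedForms := by
  obtain ⟨N, hN⟩ := exists_forall_ge_isReducedPair (irrational_xiPlus hirr)
    (irrational_xiMinus hirr) (xiPlus_ne_xiMinus hirr)
  refine ⟨N, fun i hi => ⟨formDisc_cfStep_iterate f i ▸ hirr, ?_⟩⟩
  rw [rootPair_cfStep_iterate hirr]
  exact hN (2 * i) (by lia)

lemma mapsTo_cfStep : Set.MapsTo cfStep reducedForms reducedForms := by
  rintro f ⟨hirr, hred⟩
  refine ⟨(sLEquiv_cfStep f).formDisc_eq ▸ hirr, ?_⟩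
  rw [rootPair_cfStep hirr]
  have hred' : IsReducedPair (gaussExt (rootPair f)) :=
    isReducedPair_gaussExt (irrational_xiPlus hirr) hred.1 hred.2.2
  exact isReducedPair_gaussExt (irrational_gaussMap (irrational_xiPlus hirr)) hred'.1 hred'.2.2

lemma onRiver_of_isReducedPair_rootPair (h : IsReducedPair (rootPair f)) : OnRiver f := by
  obtain ⟨hplus, -, hminus⟩ : 1 < xiPlus f ∧ -1 < xiMinus f ∧ xiMinus f < 0 := h
  have hquot : 0 < √(formDisc f : ℝ) / f.1 := by
    rw [← xiPlus_sub_xiMinus]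
    linarith
  obtain ⟨hsqrt, hm⟩ : 0 < √(formDisc f : ℝ) ∧ 0 < (f.1 : ℝ) :=
    (div_pos_iff.1 hquot).resolve_right fun h => (Real.sqrt_nonneg _).not_gt h.1
  have hdisc : 0 < formDisc f := mod_cast Real.sqrt_pos.1 hsqrt
  have hm' : 0 < f.1 := mod_cast hm
  have hn : (f.2.1 : ℝ) = f.1 * (xiPlus f * xiMinus f) := by
    have := qval_eq_mul_roots hm'.ne' hdisc.le 0 1
    simpa [qval, mul_assoc] using this
  refine ⟨hm', ?_⟩
  have hn_neg : (f.2.1 : ℝ) < 0 := by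
    rw [hn]
    exact mul_neg_of_pos_of_neg hm (mul_neg_of_pos_of_neg (by linarith) hminus)
  exact_mod_cast hn_neg

lemma abs_lt_sqrt_formDisc (hf : OnRiver f) : |(f.2.2 : ℝ)| < √(formDisc f : ℝ) := by
  have hlt : f.2.2 ^ 2 < formDisc f := by
    rw [formDisc]
    linarith [mul_neg_of_pos_of_neg hf.1 hf.2]
  rw [abs_lt, ← Real.sq_lt]
  exact_mod_cast hlt

lemma xiPlus_pos (hf : OnRiver f) : 0 < xiPlus f := by
  have hm : (0 : ℝ) < f.1 := mod_cast hf.1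
  exact div_pos (by linarith [(abs_lt.1 (abs_lt_sqrt_formDisc hf)).2]) (by positivity)

lemma xiMinus_neg (hf : OnRiver f) : xiMinus f < 0 := by
  have hm : (0 : ℝ) < f.1 := mod_cast hf.1
  exact div_neg_of_neg_of_pos (by linarith [(abs_lt.1 (abs_lt_sqrt_formDisc hf)).1])
    (by positivity)

lemma qval_neg_iff (hf : OnRiver f) {x y : ℤ} (hx : 0 ≤ x) (hy : 0 < y) :
    qval f x y < 0 ↔ (x : ℝ) < xiPlus f * y := by
  have hm : (0 : ℝ) < f.1 := mod_cast hf.1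
  have hdisc : 0 < formDisc f := by
    have := (abs_nonneg _).trans_lt (abs_lt_sqrt_formDisc hf)
    exact_mod_cast Real.sqrt_pos.1 this
  have hfactor : 0 < x - xiMinus f * y := by
    have hx' : (0 : ℝ) ≤ x := mod_cast hx
    linarith [mul_neg_of_neg_of_pos (xiMinus_neg hf) (Int.cast_pos (R := ℝ).2 hy)]
  rw [← Int.cast_lt_zero (R := ℝ), qval_eq_mul_roots hf.1.ne' hdisc.le,
    mul_right_comm, ← smul_eq_mul, smul_neg_iff_of_pos_left (mul_pos hm hfactor), sub_neg]

lemma riverStep_iterate_upper (hf : OnRiver f) {j : ℕ} (hj : j < xiPlus f) :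
    riverStep^[j] f = formSubst f 1 j 0 1 := by
  induction j with
  | zero => exact (formSubst_one f).symm
  | succ j ih =>
    push_cast at hj ⊢
    have hneg : qval (formSubst f 1 j 0 1) 1 1 < 0 := by
      rw [qval_formSubst, qval_neg_iff hf (by positivity) (by norm_num)]
      push_cast
      linarith
    rw [iterate_succ_apply', ih (by linarith), riverStep_of_neg hneg, formSubst_formSubst]
    ring_nf

lemma riverStep_iterate_lower (hf : OnRiver f) {j : ℕ} (hj : j < (xiPlus f)⁻¹) :
    riverStep^[j] f = formSubst f 1 0 j 1 := by
  induction j with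
  | zero => exact (formSubst_one f).symm
  | succ j ih =>
    push_cast at hj ⊢
    have hnonneg : 0 ≤ qval (formSubst f 1 0 j 1) 1 1 := by
      rw [← not_lt, qval_formSubst, qval_neg_iff hf (by norm_num) (by positivity), not_lt]
      have hmul := mul_lt_mul_of_pos_left hj (xiPlus_pos hf)
      rw [mul_inv_cancel₀ (xiPlus_pos hf).ne'] at hmul
      push_cast
      linarith
    rw [iterate_succ_apply', ih (by linarith), riverStep_of_nonneg hnonneg, formSubst_formSubst]
    ring_nf

lemma natCast_floor_lt_of_irrational {x : ℝ} (hx : Irrational x) (hpos : 0 ≤ x) :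
    (⌊x⌋₊ : ℝ) < x :=
  (Nat.floor_le hpos).lt_of_ne (hx.ne_nat _).symm

lemma riverStep_iterate_add_floor (hirr : Irrational √(formDisc f : ℝ)) (hf : OnRiver f) {j : ℕ}
    (hj : j < gaussMap (xiPlus f)) :
    riverStep^[j + ⌊xiPlus f⌋₊] f = formSubst (formSubst f 1 ⌊xiPlus f⌋ 0 1) 1 0 j 1 := by
  have hupper : riverStep^[⌊xiPlus f⌋₊] f = formSubst f 1 ⌊xiPlus f⌋ 0 1 := by
    rw [riverStep_iterate_upper hf (natCast_floor_lt_of_irrational (irrational_xiPlus hirr)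
      (xiPlus_pos hf).le), Int.natCast_floor_eq_floor (xiPlus_pos hf).le]
  have hriver : OnRiver (formSubst f 1 ⌊xiPlus f⌋ 0 1) :=
    hupper ▸ ((mapsTo_riverStep (irrational_sqrt_intCast_iff.1 hirr).1).iterate _
      ⟨SLEquiv.refl f, hf⟩).2
  rw [iterate_add_apply, hupper, riverStep_iterate_lower hriver]
  rwa [xiPlus_formSubst_upper hirr]

lemma birkhoffSum_gaussMap_two (x : ℝ) :
    birkhoffSum gaussMap Nat.floor 2 x = ⌊gaussMap x⌋₊ + ⌊x⌋₊ := by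
  rw [birkhoffSum_succ', birkhoffSum_one, add_comm]

lemma riverStep_iterate_eq_cfStep (hirr : Irrational √(formDisc f : ℝ)) (hf : OnRiver f) :
    riverStep^[birkhoffSum gaussMap Nat.floor 2 (xiPlus f)] f = cfStep f := by
  have hxi := irrational_xiPlus hirr
  have hpos : 0 ≤ gaussMap (xiPlus f) := zero_le_one.trans (one_lt_gaussMap hxi).le
  rw [birkhoffSum_gaussMap_two, riverStep_iterate_add_floor hirr hf
    (natCast_floor_lt_of_irrational (irrational_gaussMap hxi) hpos),
    Int.natCast_floor_eq_floor hpos, cfStep]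

lemma riverStep_iterate_notMem_reducedForms (hirr : Irrational √(formDisc f : ℝ))
    (hf : OnRiver f) {l : ℕ} (hl : 0 < l)
    (hlt : l < birkhoffSum gaussMap Nat.floor 2 (xiPlus f)) :
    riverStep^[l] f ∉ reducedForms := by
  have hxi := irrational_xiPlus hirr
  rintro ⟨-, hplus, hminus, -⟩
  rcases le_or_gt l ⌊xiPlus f⌋₊ with hle | hgt
  · have hl' : (1 : ℝ) ≤ l := mod_cast hl
    have hlt_xi : l < xiPlus f := (Nat.cast_le.2 hle).trans_lt
      (natCast_floor_lt_of_irrational hxi (xiPlus_pos hf).le)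
    rw [riverStep_iterate_upper hf hlt_xi, rootPair, xiMinus_formSubst_upper hirr] at hminus
    push_cast at hminus
    linarith [xiMinus_neg hf]
  · obtain ⟨j, rfl⟩ := Nat.exists_eq_add_of_le' hgt.le
    rw [birkhoffSum_gaussMap_two] at hlt
    have hj : (j + 1 : ℝ) ≤ gaussMap (xiPlus f) := mod_cast
      (Nat.le_floor_iff' j.succ_ne_zero).1 (Nat.succ_le_of_lt (Nat.lt_of_add_lt_add_right hlt))
    rw [riverStep_iterate_add_floor hirr hf (by linarith), rootPair, xiPlus_formSubst_lower
      ((sLEquiv_formSubst_upper f _).formDisc_eq ▸ hirr), xiPlus_formSubst_upper hirr] at hplus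
    refine hplus.not_ge (inv_le_one_of_one_le₀ ?_)
    change 1 ≤ gaussMap (xiPlus f) - j
    linarith

lemma birkhoffSum_cfStep (hirr : Irrational √(formDisc f : ℝ)) (n : ℕ) :
    birkhoffSum cfStep (fun g => birkhoffSum gaussMap Nat.floor 2 (xiPlus g)) n f =
      birkhoffSum gaussMap Nat.floor (2 * n) (xiPlus f) := by
  induction n with
  | zero => rfl
  | succ n ih =>
    rw [birkhoffSum_succ, ih, xiPlus_cfStep_iterate hirr, mul_add_one, birkhoffSum_add]

lemma mem_periodicPts_cfStep (hirr : Irrational √(formDisc f : ℝ))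
    (hper : xiPlus f ∈ periodicPts gaussMap) : f ∈ periodicPts cfStep := by
  have hpos := Nat.lcm_pos two_pos (minimalPeriod_pos_of_mem_periodicPts hper)
  rw [← minimalPeriod_cfStep hirr hper] at hpos
  exact minimalPeriod_pos_iff_mem_periodicPts.1 (pos_of_mul_pos_right hpos two_pos.le)

end ReducedForms

section Count

variable {f : ℤ × ℤ × ℤ}

lemma river_eq_setOf_iterate_eq (hsq : ¬ IsSquare (formDisc f)) (hf : OnRiver f)
    (hper : f ∈ periodicPts riverStep) : river f = {g | ∃ j, riverStep^[j] f = g} := by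
  have hmem : f ∈ river f := ⟨SLEquiv.refl f, hf⟩
  have hmaps := mapsTo_riverStep hsq
  ext g
  refine ⟨fun hg => ?_, ?_⟩
  · rcases exists_riverStep_iterate_eq_or hsq hf hg with hforward | ⟨j, hj⟩
    · exact hforward
    · exact exists_iterate_eq_of_injOn hmaps (injOn_riverStep.mono fun _ h => h.2) hmem hper hg hj
  · rintro ⟨j, rfl⟩
    exact hmaps.iterate j hmem

lemma ncard_river_of_mem_reducedForms (hf : f ∈ reducedForms)
    (hper : xiPlus f ∈ periodicPts gaussMap) :
    (river f).ncard = birkhoffSum gaussMap Nat.floor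
      (Nat.lcm 2 (minimalPeriod gaussMap (xiPlus f))) (xiPlus f) := by
  let r (g : ℤ × ℤ × ℤ) : ℕ := birkhoffSum gaussMap Nat.floor 2 (xiPlus g)
  have hriver {g} (hg : g ∈ reducedForms) : OnRiver g := onRiver_of_isReducedPair_rootPair hg.2
  have hreturn : ∀ g ∈ reducedForms, riverStep^[r g] g = cfStep g := fun g hg =>
    riverStep_iterate_eq_cfStep hg.1 (hriver hg)
  have hr : ∀ g ∈ reducedForms, 0 < r g := fun g hg => by
    change 0 < birkhoffSum gaussMap Nat.floor 2 (xiPlus g)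
    rw [birkhoffSum_gaussMap_two]
    exact Nat.add_pos_right _ (Nat.floor_pos.2 hg.2.1.le)
  have hfirst : ∀ g ∈ reducedForms, ∀ l, 0 < l → l < r g → riverStep^[l] g ∉ reducedForms :=
    fun g hg _ => riverStep_iterate_notMem_reducedForms hg.1 (hriver hg)
  have hper' : f ∈ periodicPts cfStep := mem_periodicPts_cfStep hf.1 hper
  rw [river_eq_setOf_iterate_eq (irrational_sqrt_intCast_iff.1 hf.1).1 (hriver hf)
      (mem_periodicPts_of_induced mapsTo_cfStep hreturn hr hf hper'),
    ncard_setOf_iterate_eq (mem_periodicPts_of_induced mapsTo_cfStep hreturn hr hf hper'),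
    minimalPeriod_eq_birkhoffSum_induced mapsTo_cfStep hreturn hr hfirst hf hper',
    birkhoffSum_cfStep hf.1, minimalPeriod_cfStep hf.1 hper]

lemma natCast_birkhoffSum_floor {x : ℝ} (hx : 0 ≤ x) (n : ℕ) :
    ((birkhoffSum gaussMap Nat.floor n x : ℕ) : ℤ) = birkhoffSum gaussMap Int.floor n x := by
  rw [birkhoffSum, birkhoffSum, Nat.cast_sum]
  refine Finset.sum_congr rfl fun i _ => Int.natCast_floor_eq_floor ?_
  exact Iterate.rec (0 ≤ ·) hx (fun y _ => inv_nonneg.2 (Int.fract_nonneg y)) i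

lemma ncard_setOf_fst_neg_snd_pos (f : ℤ × ℤ × ℤ) :
    {g | SLEquiv f g ∧ g.1 < 0 ∧ 0 < g.2.1}.ncard = (river f).ncard := by
  have hrotate (g : ℤ × ℤ × ℤ) : SLEquiv g (g.2.1, g.1, -g.2.2) := by
    simpa [formSubst, qval] using sLEquiv_formSubst g (show (0 : ℤ) * 0 - -1 * 1 = 1 by norm_num)
  have hinvol : Involutive fun g : ℤ × ℤ × ℤ => (g.2.1, g.1, -g.2.2) := fun g => by simp
  rw [← Set.ncard_image_of_injective (river f) hinvol.injective, hinvol.image_eq_preimage_symm]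
  congr 1
  ext g
  exact and_congr ⟨fun h => h.trans (hrotate g), fun h => h.trans (hrotate g).symm⟩ and_comm

lemma exists_mem_reducedForms (hirr : Irrational √(formDisc f : ℝ)) (N : ℕ) :
    ∃ g ∈ reducedForms, SLEquiv f g ∧ ∃ M ≥ N, xiPlus g = gaussMap^[M] (xiPlus f) := by
  obtain ⟨K, hK⟩ := exists_forall_ge_cfStep_iterate_mem_reducedForms hirr
  exact ⟨cfStep^[max K N] f, hK _ (le_max_left K N), sLEquiv_iterate sLEquiv_cfStep f _,
    2 * max K N, by lia, xiPlus_cfStep_iterate hirr _⟩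

lemma ncard_river {s : List ℤ} (hirr : Irrational √(formDisc f : ℝ))
    (hs : IsCFPeriod s (xiPlus f)) :
    ((river f).ncard : ℤ) = (if Even s.length then s else s ++ s).sum := by
  obtain ⟨N, hN⟩ := hs.exists_forall_ge_birkhoffSum_lcm
  obtain ⟨g, hg, hfg, M, hM, hxi⟩ := exists_mem_reducedForms hirr N
  obtain ⟨hper, hsum⟩ := hN M hM
  rw [← hxi] at hper hsum
  have hnonneg : 0 ≤ xiPlus g := zero_le_one.trans hg.2.1.le
  rw [river_eq_of_sLEquiv hfg, ncard_river_of_mem_reducedForms hg hper,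
    natCast_birkhoffSum_floor hnonneg, hsum]

end Count

/-- With `Π` equal to `Γ` if the period length is even and to `Γ²` otherwise, and
`t` the sum of the entries of `Π`, the class of `(m,n,k)` has exactly `t` points with
`m' > 0, n' < 0`, and exactly `t` points with `m' < 0, n' > 0`. -/
theorem statement11 (m n k : ℤ)
    (hpos : 0 < formDisc (m, n, k)) (hsq : ¬ IsSquare (formDisc (m, n, k))) :
    ∀ s : List ℤ, IsCFPeriod s (xiPlus (m, n, k)) →
      (({g : ℤ × ℤ × ℤ | SLEquiv (m, n, k) g ∧ 0 < g.1 ∧ g.2.1 < 0}.ncard : ℤ)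
          = (if Even s.length then s else s ++ s).sum ∧
       ({g : ℤ × ℤ × ℤ | SLEquiv (m, n, k) g ∧ g.1 < 0 ∧ 0 < g.2.1}.ncard : ℤ)
          = (if Even s.length then s else s ++ s).sum) := by
  intro s hs
  have hirr : Irrational √(formDisc (m, n, k) : ℝ) :=
    irrational_sqrt_intCast_iff.2 ⟨hsq, hpos.le⟩
  exact ⟨ncard_river hirr hs,
    (congrArg Nat.cast (ncard_setOf_fst_neg_snd_pos (m, n, k))).trans (ncard_river hirr hs)⟩
end
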